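/- Conditional FDR control of the two-stage (screening then knockoff) procedure with data splitting: let (Ω, F, P) be a probability space, F₁ ⊆ F a sub-σ-algebra (generated by the first half of the data), and Â : Ω → 2^{{1,…,m}} an F₁-measurable random subset of {1,…,m} (the screened set). Let S ⊆ {1,…,m} be fixed (the true active set) and q ∈ [0,1]. Suppose that for every subset A ⊆ {1,…,m} with S ⊆ A there is a random subset Ŝ_A : Ω → 2^{A} (the GKnockoff selection computed from the second half of the data restricted to A) such that Ŝ_A is independent of F₁ and E[ #(Ŝ_A ∩ S^c) / max(#Ŝ_A, 1) ] ≤ q. Define the final selection Ŝ_H(ω) = Ŝ_{Â(ω)}(ω), and let E = {ω : S ⊆ Â(ω)} be the sure-screening event with P(E) > 0. Then E[ #(Ŝ_H ∩ S^c) / max(#Ŝ_H, 1) | E ] ≤ q. -/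

import Mathlib

open MeasureTheory ProbabilityTheory Finset

/-- A set whose outer measure and that of its complement add up to one is null measurable. -/
lemma nullMeasurableSet_of_add_compl {Ω : Type*} [mΩ : MeasurableSpace Ω] (P : Measure Ω)
    [IsProbabilityMeasure P] (D : Set Ω) (h : P D + P Dᶜ = 1) : NullMeasurableSet D P := by
  set U := toMeasurable P D with hU
  set V := toMeasurable P Dᶜ with hV
  have hUV : U ∪ V = Set.univ := by
    rw [Set.eq_univ_iff_forall]
    intro x
    by_cases hx : x ∈ D
    · exact Or.inl (subset_toMeasurable P D hx)
    · exact Or.inr (subset_toMeasurable P Dᶜ hx)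
  have h1 : P (U ∪ V) + P (U ∩ V) = P U + P V :=
    measure_union_add_inter U (measurableSet_toMeasurable P Dᶜ)
  rw [hUV, measure_univ, hU, hV, measure_toMeasurable, measure_toMeasurable, h] at h1
  have h2 : P (U ∩ V) = 0 := by
    have : (1 : ENNReal) + P (U ∩ V) = 1 + 0 := by rw [add_zero]; exact h1
    exact (ENNReal.add_right_inj ENNReal.one_ne_top).1 this
  have h3 : P (U \ D) = 0 :=
    measure_mono_null (show U \ D ⊆ U ∩ V from
      fun x hx => ⟨hx.1, subset_toMeasurable P Dᶜ hx.2⟩) h2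
  have h4 : D = U \ (U \ D) := by
    rw [Set.sdiff_sdiff_cancel_left (subset_toMeasurable P D)]
  rw [h4]
  exact (measurableSet_toMeasurable P D).nullMeasurableSet.diff (NullMeasurableSet.of_null h3)

/-- The bound on one cell of the screening partition. -/
lemma setIntegral_le_of_indep {Ω α : Type*} (F1 : MeasurableSpace Ω) [mΩ : MeasurableSpace Ω]
    (P : Measure Ω) [IsProbabilityMeasure P] (hF1 : F1 ≤ mΩ)
    (X : Ω → α) (hind : Indep F1 (MeasurableSpace.comap X ⊤) P) (g : α → ℝ) (q : ℝ)
    (hX : ∫ ω, g (X ω) ∂P ≤ q) (B : Set Ω) (hB : MeasurableSet[F1] B)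
    (hint : IntegrableOn (fun ω => g (X ω)) B P) :
    ∫ ω in B, g (X ω) ∂P ≤ P.real B * q := by
  have hB' : MeasurableSet[mΩ] B := hF1 _ hB
  by_cases h0 : P B = 0
  · rw [Measure.restrict_eq_zero.2 h0]
    simp [Measure.real, h0]
  have hcomap : MeasurableSpace.comap (fun ω => g (X ω)) inferInstance ≤
      MeasurableSpace.comap X ⊤ := by
    rintro _ ⟨s, -, rfl⟩
    exact ⟨g ⁻¹' s, trivial, rfl⟩
  have hnull : NullMeasurable (fun ω => g (X ω)) P := by
    intro s hs
    set D := (fun ω => g (X ω)) ⁻¹' s with hD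
    have hDm : MeasurableSet[MeasurableSpace.comap X ⊤] D := hcomap _ ⟨s, hs, rfl⟩
    have h1 := (Indep_iff _ _ _).1 hind B D hB hDm
    have h2 := (Indep_iff _ _ _).1 hind B Dᶜ hB hDm.compl
    have h3 : NullMeasurableSet D (P.restrict B) :=
      hint.aestronglyMeasurable.aemeasurable.nullMeasurableSet_preimage hs
    have h4 := measure_add_measure_compl₀ h3
    rw [Measure.restrict_apply' hB', Measure.restrict_apply' hB', Set.inter_comm D,
      Set.inter_comm Dᶜ, h1, h2, ← mul_add, Measure.restrict_apply_univ] at h4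
    apply nullMeasurableSet_of_add_compl
    have h5 : P B * (P D + P Dᶜ) = P B * 1 := by rw [mul_one]; exact h4
    exact (ENNReal.mul_right_inj h0 (measure_ne_top P B)).1 h5
  have hae : AEStronglyMeasurable (fun ω => g (X ω)) P :=
    hnull.aemeasurable.aestronglyMeasurable
  have hBm : @Measurable Ω ℝ F1 _ (B.indicator (fun _ => (1 : ℝ))) :=
    (@measurable_const _ _ _ F1 _).indicator hB
  have hif : IndepFun (B.indicator (fun _ => (1 : ℝ))) (fun ω => g (X ω)) P := by
    rw [IndepFun_iff_Indep]
    exact indep_of_indep_of_le_right (indep_of_indep_of_le_left hind hBm.comap_le) hcomap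
  have hmul := hif.integral_mul_eq_mul_integral (hBm.mono hF1 le_rfl).aestronglyMeasurable hae
  have e1 : B.indicator (fun _ => (1 : ℝ)) * (fun ω => g (X ω)) =
      B.indicator (fun ω => g (X ω)) := by
    ext ω
    by_cases h : ω ∈ B <;> simp [h]
  rw [e1, integral_indicator hB', integral_indicator hB'] at hmul
  rw [hmul]
  simp only [integral_const, smul_eq_mul, mul_one, measureReal_restrict_apply_univ]
  exact mul_le_mul_of_nonneg_left hX measureReal_nonneg

/-- Conditional FDR control of the two-stage
(screening then knockoff) procedure with data splitting (Theorem 9(b)). -/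
theorem two_stage_conditional_fdr_control
    {Ω : Type*} [mΩ : MeasurableSpace Ω] (P : Measure Ω) [IsProbabilityMeasure P]
    {m : ℕ}
    -- F₁ : the sub-σ-algebra generated by the first half of the data
    (F1 : MeasurableSpace Ω) (hF1 : F1 ≤ mΩ)
    -- the screened set, F₁-measurable
    (Ahat : Ω → Finset (Fin m))
    (hAhat : @Measurable Ω (Finset (Fin m)) F1 ⊤ Ahat)
    -- the true active set and the target FDR level
    (S : Finset (Fin m)) (q : ℝ) (hq : q ∈ Set.Icc (0 : ℝ) 1)
    -- for each screened set A containing S, the GKnockoff selection on A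
    (Shat : Finset (Fin m) → Ω → Finset (Fin m))
    (hsub : ∀ A, S ⊆ A → ∀ ω, Shat A ω ⊆ A)
    (hindep : ∀ A, S ⊆ A →
      Indep F1 (MeasurableSpace.comap (Shat A) ⊤) P)
    (hFDR : ∀ A, S ⊆ A →
      ∫ ω, ((Shat A ω ∩ Sᶜ).card : ℝ) / max ((Shat A ω).card : ℝ) 1 ∂P ≤ q)
    -- the sure-screening event has positive probability
    (hE : 0 < P {ω | S ⊆ Ahat ω}) :
    ∫ ω, ((Shat (Ahat ω) ω ∩ Sᶜ).card : ℝ) / max ((Shat (Ahat ω) ω).card : ℝ) 1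
        ∂(P[|{ω | S ⊆ Ahat ω}]) ≤ q := by
  classical
  set E : Set Ω := {ω | S ⊆ Ahat ω} with hEdef
  let g : Finset (Fin m) → ℝ := fun T => ((T ∩ Sᶜ).card : ℝ) / max (T.card : ℝ) 1
  change ∫ ω, g (Shat (Ahat ω) ω) ∂(P[|E]) ≤ q
  by_cases hi : Integrable (fun ω => g (Shat (Ahat ω) ω)) (P[|E])
  swap
  · rw [integral_undef hi]; exact hq.1
  have hcell1 : ∀ A, MeasurableSet[F1] (Ahat ⁻¹' {A}) := fun A => hAhat trivial
  have hcell : ∀ A, MeasurableSet[mΩ] (Ahat ⁻¹' {A}) := fun A => hF1 _ (hcell1 A)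
  have hEtop : P E ≠ ⊤ := measure_ne_top P E
  have hiE : IntegrableOn (fun ω => g (Shat (Ahat ω) ω)) E P := by
    rw [ProbabilityTheory.cond] at hi
    exact (integrable_smul_measure (ENNReal.inv_ne_zero.2 hEtop)
      (ENNReal.inv_ne_top.2 hE.ne')).1 hi
  have hEU : E = ⋃ A ∈ (Finset.univ.filter (fun A => S ⊆ A)), Ahat ⁻¹' {A} := by
    ext ω; simp [hEdef]
  have hdisj : Set.Pairwise (↑(Finset.univ.filter (fun A : Finset (Fin m) => S ⊆ A)))
      (Function.onFun Disjoint (fun A => Ahat ⁻¹' {A})) := by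
    intro A _ A' _ hne
    exact Disjoint.preimage _ (Set.disjoint_singleton.2 hne)
  have hsubE : ∀ A, S ⊆ A → Ahat ⁻¹' {A} ⊆ E := by
    intro A hA ω hω
    have : Ahat ω = A := hω
    simpa [hEdef, this] using hA
  have hmain : ∫ ω in E, g (Shat (Ahat ω) ω) ∂P ≤ P.real E * q := by
    have hPE : P.real E = ∑ A ∈ Finset.univ.filter (fun A => S ⊆ A),
        P.real (Ahat ⁻¹' {A}) := by
      conv_lhs => rw [hEU]
      exact measureReal_biUnion_finset hdisj (fun A _ => hcell A)
    rw [hPE, Finset.sum_mul]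
    conv_lhs => rw [hEU]
    rw [integral_biUnion_finset _ (fun A _ => hcell A) hdisj
      (fun A hA => hiE.mono_set (hsubE A (Finset.mem_filter.1 hA).2))]
    refine Finset.sum_le_sum fun A hA => ?_
    have hSA := (Finset.mem_filter.1 hA).2
    have heq : Set.EqOn (fun ω => g (Shat (Ahat ω) ω)) (fun ω => g (Shat A ω))
        (Ahat ⁻¹' {A}) := by
      intro ω hω
      have : Ahat ω = A := hω
      simp only [this]
    rw [setIntegral_congr_fun (hcell A) heq]
    exact setIntegral_le_of_indep (mΩ := mΩ) F1 P hF1 (Shat A) (hindep A hSA) g q (hFDR A hSA) _ (hcell1 A)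
      ((hiE.mono_set (hsubE A hSA)).congr_fun heq (hcell A))
  have hpos : 0 < P.real E := ENNReal.toReal_pos hE.ne' hEtop
  rw [ProbabilityTheory.cond, integral_smul_measure, ENNReal.toReal_inv, smul_eq_mul]
  change (P.real E)⁻¹ * _ ≤ q
  rw [inv_mul_le_iff₀ hpos]
  exact hmain
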